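/- arXiv:2106.07920 — 3 statements merged into one kernel-verified Lean document; each statement's English description precedes it below -/
import Mathlib

section
/- Fix an integer k ≥ 1. Let Ω ⊂ ℝ² be a compact convex set containing the origin in its interior, and let (Ω_i) be a sequence of compact convex subsets of ℝ², each containing the origin in its interior, converging to Ω in the Hausdorff metric. Then 𝔩_k(Ω_i) → 𝔩_k(Ω) and 𝔲_k(Ω_i) → 𝔲_k(Ω) as i → ∞; that is, 𝔩_k and 𝔲_k are continuous with respect to the Hausdorff metric. -/
/-!
The support functions `h_Ω(v) = ‖v‖*_Ω` of two compact sets at Hausdorff distance `d` (for the sup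
metric) satisfy `|h_A(v) - h_B(v)| ≤ d ‖v‖₁` (`omegaNorm_le_add`). If `Ω` contains the closed ball
of radius `r` about the origin, then `r ‖v‖₁ ≤ h_Ω(v)` (`mul_sum_abs_le_omegaNorm`), so the additive
error becomes a relative one: `(1 - d/r) h_Ω ≤ h_{Ω_i} ≤ (1 + d/r) h_Ω`. Relative bounds are additive
over sequences of vectors, uniformly in their length, and pass to infima. Hence, once `d_i ≤ r`, both
`𝔩_k(Ω_i)` and `𝔲_k(Ω_i)` lie between `(1 - d_i/r)` and `(1 + d_i/r)` times their value at `Ω`, for whatever family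
of admissible sequences the infimum is taken over (`tendsto_sInf_length`).
-/

open scoped BigOperators

/-- The `Ω`-norm `‖v‖*_Ω = sup_{u ∈ Ω} ⟨u, v⟩`. -/
noncomputable def omegaNorm {n : ℕ} (Ω : Set (Fin n → ℝ)) (v : Fin n → ℝ) : ℝ :=
  sSup ((fun u => ∑ i, u i * v i) '' Ω)

/-- Coercion of an integer vector to a real vector. -/
def toR {n : ℕ} (v : Fin n → ℤ) : Fin n → ℝ := fun i => (v i : ℝ)

/-- The set of values `∑ ‖v_i‖*_Ω` over sequences `v_1, …, v_m ∈ ℤⁿ \ 0`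
with `m ≥ k+1` and `∑ v_i = 0`. -/
def lSet {n : ℕ} (Ω : Set (Fin n → ℝ)) (k : ℕ) : Set ℝ :=
  {x | ∃ (m : ℕ) (v : Fin m → Fin n → ℤ),
    k + 1 ≤ m ∧ (∀ i, v i ≠ 0) ∧ (∑ i, v i) = 0 ∧
    x = ∑ i, omegaNorm Ω (toR (v i))}

/-- The lower bound quantity `𝔩_k(Ω)`. -/
noncomputable def lk {n : ℕ} (Ω : Set (Fin n → ℝ)) (k : ℕ) : ℝ := sInf (lSet Ω k)

/-- The standard basis vector `e_j` of `ℤ²`. -/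
def eInt (j : Fin 2) : Fin 2 → ℤ := Pi.single j 1

/-- The admissibility condition on sequences for `𝔲_k`: either `m = 2` and the
sequence is `e_j, -e_j` for some `j`, or for each `j` some `v_i` is not in the
`ℝ`-span of `e_j`. -/
def uAdmissible (m : ℕ) (v : Fin m → Fin 2 → ℤ) : Prop :=
  (m = 2 ∧ ∃ j : Fin 2, ∃ i₁ i₂ : Fin m, i₁ ≠ i₂ ∧ v i₁ = eInt j ∧ v i₂ = -eInt j) ∨
  (∀ j : Fin 2, ∃ i : Fin m, ∃ j' : Fin 2, j' ≠ j ∧ v i j' ≠ 0)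

/-- The set of values `∑ ‖v_i‖*_Ω` over admissible sequences for `𝔲_k`. -/
def uSet (Ω : Set (Fin 2 → ℝ)) (k : ℕ) : Set ℝ :=
  {x | ∃ (m : ℕ) (v : Fin m → Fin 2 → ℤ),
    k + 1 ≤ m ∧ (∀ i, v i ≠ 0) ∧ (∑ i, v i) = 0 ∧ uAdmissible m v ∧
    x = ∑ i, omegaNorm Ω (toR (v i))}

/-- The upper bound quantity `𝔲_k(Ω)`. -/
noncomputable def uk (Ω : Set (Fin 2 → ℝ)) (k : ℕ) : ℝ := sInf (uSet Ω k)

/-- The symmetrization `Ω̂ = {x : (|x₁|, |x₂|) ∈ Ω}`. -/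
def hatSet (Ω : Set (Fin 2 → ℝ)) : Set (Fin 2 → ℝ) := {x | (fun i => |x i|) ∈ Ω}

/-- A strongly convex moment domain: `Ω ⊂ [0,∞)²` with `Ω̂` convex and compact
with nonempty interior. -/
def IsStronglyConvexDomain (Ω : Set (Fin 2 → ℝ)) : Prop :=
  (∀ u ∈ Ω, ∀ i, 0 ≤ u i) ∧ Convex ℝ (hatSet Ω) ∧ IsCompact (hatSet Ω) ∧
    (interior (hatSet Ω)).Nonempty

/-- The width `a(Ω) = max {a : (a,0) ∈ Ω}`. -/
noncomputable def widthA (Ω : Set (Fin 2 → ℝ)) : ℝ := sSup {a : ℝ | ![a, 0] ∈ Ω}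

/-- The width `b(Ω) = max {b : (0,b) ∈ Ω}`. -/
noncomputable def widthB (Ω : Set (Fin 2 → ℝ)) : ℝ := sSup {b : ℝ | ![0, b] ∈ Ω}

lemma bddAbove_pairing {n : ℕ} {A : Set (Fin n → ℝ)} (hA : IsCompact A) (v : Fin n → ℝ) :
    BddAbove ((fun u : Fin n → ℝ => ∑ i, u i * v i) '' A) :=
  (hA.image (by fun_prop)).bddAbove

lemma omegaNorm_nonneg {n : ℕ} {A : Set (Fin n → ℝ)} (hA : IsCompact A) (h0 : 0 ∈ A)
    (v : Fin n → ℝ) : 0 ≤ omegaNorm A v :=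
  le_csSup (bddAbove_pairing hA v) ⟨0, h0, by simp⟩

lemma omegaNorm_le_add {n : ℕ} {A B : Set (Fin n → ℝ)} (hA : IsCompact A) (hB : IsCompact B)
    (hA0 : A.Nonempty) (hB0 : B.Nonempty) (v : Fin n → ℝ) :
    omegaNorm A v ≤ omegaNorm B v + Metric.hausdorffDist A B * ∑ i, |v i| := by
  refine csSup_le (hA0.image _) ?_
  rintro _ ⟨u, hu, rfl⟩
  obtain ⟨w, hw, hd⟩ := hB.exists_infDist_eq_dist hB0 u
  have hle : dist u w ≤ Metric.hausdorffDist A B := hd ▸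
    Metric.infDist_le_hausdorffDist_of_mem hu
      (Metric.hausdorffEDist_ne_top_of_nonempty_of_bounded hA0 hB0 hA.isBounded hB.isBounded)
  have hw' : ∑ i, w i * v i ≤ omegaNorm B v := le_csSup (bddAbove_pairing hB v) ⟨w, hw, rfl⟩
  calc ∑ i, u i * v i = ∑ i, w i * v i + ∑ i, (u i - w i) * v i := by
        rw [← Finset.sum_add_distrib]
        exact Finset.sum_congr rfl fun i _ => by ring
    _ ≤ omegaNorm B v + ∑ i, Metric.hausdorffDist A B * |v i| := by
        refine add_le_add hw' (Finset.sum_le_sum fun i _ => ?_)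
        calc (u i - w i) * v i ≤ |u i - w i| * |v i| := by
              rw [← abs_mul]; exact le_abs_self _
          _ ≤ Metric.hausdorffDist A B * |v i| := by
              gcongr
              exact (dist_le_pi_dist u w i).trans hle
    _ = _ := by rw [Finset.mul_sum]

lemma mul_sum_abs_le_omegaNorm {n : ℕ} {A : Set (Fin n → ℝ)} (hA : IsCompact A) {r : ℝ}
    (hr : 0 ≤ r) (hball : Metric.closedBall 0 r ⊆ A) (v : Fin n → ℝ) :
    r * ∑ i, |v i| ≤ omegaNorm A v := by
  -- The sup-norm ball is a cube, and its corner `r • sign v` attains `r * ‖v‖₁`.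
  refine le_csSup (bddAbove_pairing hA v) ⟨fun i => r * SignType.sign (v i), hball ?_, ?_⟩
  · rw [mem_closedBall_zero_iff, pi_norm_le_iff_of_nonneg hr]
    intro i
    rcases lt_trichotomy (v i) 0 with h | h | h <;> simp [h, abs_of_nonneg hr, hr]
  · simp only [Finset.mul_sum, mul_assoc, sign_mul_self]

/-- No nonemptiness of `J` is needed: over the empty family both infima are `0`. -/
lemma mul_sInf_image_le {ι : Type*} (J : Set ι) (f g : ι → ℝ) {c : ℝ} (hc : 0 ≤ c)
    (hf : ∀ x, 0 ≤ f x) (h : ∀ x, c * f x ≤ g x) : c * sInf (f '' J) ≤ sInf (g '' J) := by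
  rcases J.eq_empty_or_nonempty with rfl | hJ
  · simp
  · refine le_csInf (hJ.image g) ?_
    rintro _ ⟨x, hx, rfl⟩
    refine le_trans ?_ (h x)
    gcongr
    exact csInf_le ⟨0, by rintro _ ⟨y, -, rfl⟩; exact hf y⟩ ⟨x, hx, rfl⟩

/-- The total `Ω`-length `∑ ‖v_i‖*_Ω` of a finite sequence of integer vectors. -/
noncomputable def seqLength {n : ℕ} (Ω : Set (Fin n → ℝ)) (p : Σ m : ℕ, Fin m → Fin n → ℤ) : ℝ :=
  ∑ i, omegaNorm Ω (toR (p.2 i))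

/-- The infimum of the `Ω`-length over any fixed family `J` of sequences is continuous in `Ω`. -/
lemma tendsto_sInf_length {n : ℕ} (J : Set (Σ m : ℕ, Fin m → Fin n → ℤ)) {Ω : Set (Fin n → ℝ)}
    (hΩ : IsCompact Ω) (hΩ0 : 0 ∈ interior Ω) {Ωs : ℕ → Set (Fin n → ℝ)}
    (hs : ∀ i, IsCompact (Ωs i)) (hs0 : ∀ i, 0 ∈ Ωs i)
    (hH : Filter.Tendsto (fun i => Metric.hausdorffDist (Ωs i) Ω) Filter.atTop (nhds 0)) :
    Filter.Tendsto (fun i => sInf (seqLength (Ωs i) '' J)) Filter.atTop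
      (nhds (sInf (seqLength Ω '' J))) := by
  obtain ⟨r, hr, hball⟩ :=
    Metric.nhds_basis_closedBall.mem_iff.1 (mem_interior_iff_mem_nhds.1 hΩ0)
  have h0 : 0 ∈ Ω := interior_subset hΩ0
  set t : ℕ → ℝ := fun i => Metric.hausdorffDist (Ωs i) Ω / r with ht
  have ht0 : ∀ i, 0 ≤ t i := fun i => div_nonneg Metric.hausdorffDist_nonneg hr.le
  have htlim : Filter.Tendsto t Filter.atTop (nhds 0) := by simpa using hH.div_const r
  have herr : ∀ i v, Metric.hausdorffDist (Ωs i) Ω * ∑ j, |v j| ≤ t i * omegaNorm Ω v := by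
    intro i v
    calc Metric.hausdorffDist (Ωs i) Ω * ∑ j, |v j| = t i * (r * ∑ j, |v j|) := by
          simp only [ht]; field_simp
      _ ≤ _ := mul_le_mul_of_nonneg_left (mul_sum_abs_le_omegaNorm hΩ hr.le hball v) (ht0 i)
  have hup : ∀ i p, seqLength (Ωs i) p ≤ (1 + t i) * seqLength Ω p := by
    intro i p
    rw [seqLength, seqLength, Finset.mul_sum]
    refine Finset.sum_le_sum fun j _ => ?_
    have := omegaNorm_le_add (hs i) hΩ ⟨0, hs0 i⟩ ⟨0, h0⟩ (toR (p.2 j))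
    linarith [herr i (toR (p.2 j))]
  have hlow : ∀ i p, (1 - t i) * seqLength Ω p ≤ seqLength (Ωs i) p := by
    intro i p
    rw [seqLength, seqLength, Finset.mul_sum]
    refine Finset.sum_le_sum fun j _ => ?_
    have := omegaNorm_le_add hΩ (hs i) ⟨0, h0⟩ ⟨0, hs0 i⟩ (toR (p.2 j))
    rw [Metric.hausdorffDist_comm] at this
    linarith [herr i (toR (p.2 j))]
  have hpos : ∀ p, 0 ≤ seqLength Ω p := fun p =>
    Finset.sum_nonneg fun j _ => omegaNorm_nonneg hΩ h0 _
  have hspos : ∀ i p, 0 ≤ seqLength (Ωs i) p := fun i p =>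
    Finset.sum_nonneg fun j _ => omegaNorm_nonneg (hs i) (hs0 i) _
  have hl : Filter.Tendsto (fun i => (1 - t i) * sInf (seqLength Ω '' J)) Filter.atTop
      (nhds (sInf (seqLength Ω '' J))) := by
    simpa using (htlim.const_sub 1).mul_const (sInf (seqLength Ω '' J))
  have hu : Filter.Tendsto (fun i => (1 + t i) * sInf (seqLength Ω '' J)) Filter.atTop
      (nhds (sInf (seqLength Ω '' J))) := by
    simpa using (htlim.const_add 1).mul_const (sInf (seqLength Ω '' J))
  refine tendsto_of_tendsto_of_tendsto_of_le_of_le' hl hu ?_ ?_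
  · filter_upwards [htlim.eventually_le_const one_pos] with i hi
    exact mul_sInf_image_le J _ _ (by linarith) hpos (hlow i)
  · refine Filter.Eventually.of_forall fun i => ?_
    have h1 : 0 < 1 + t i := by linarith [ht0 i]
    have := mul_sInf_image_le J _ (seqLength Ω) (inv_pos.2 h1).le (hspos i) fun p =>
      (inv_mul_le_iff₀ h1).2 (hup i p)
    exact (inv_mul_le_iff₀ h1).1 this

/-- `𝔩_k` and `𝔲_k` are continuous in the Hausdorff metric: if
compact convex sets `Ω_i` (each containing the origin in its interior) converge
to `Ω` in the Hausdorff metric, then `𝔩_k(Ω_i) → 𝔩_k(Ω)` and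
`𝔲_k(Ω_i) → 𝔲_k(Ω)`. -/
theorem lk_uk_continuous (k : ℕ) (hk : 1 ≤ k) (Ω : Set (Fin 2 → ℝ))
    (hΩcpt : IsCompact Ω) (hΩconv : Convex ℝ Ω)
    (hΩ0 : (0 : Fin 2 → ℝ) ∈ interior Ω)
    (Ωs : ℕ → Set (Fin 2 → ℝ))
    (hcpt : ∀ i, IsCompact (Ωs i)) (hconv : ∀ i, Convex ℝ (Ωs i))
    (h0 : ∀ i, (0 : Fin 2 → ℝ) ∈ interior (Ωs i))
    (hH : Filter.Tendsto (fun i => Metric.hausdorffDist (Ωs i) Ω)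
      Filter.atTop (nhds 0)) :
    Filter.Tendsto (fun i => lk (Ωs i) k) Filter.atTop (nhds (lk Ω k)) ∧
    Filter.Tendsto (fun i => uk (Ωs i) k) Filter.atTop (nhds (uk Ω k)) := by
  have hs0 : ∀ i, (0 : Fin 2 → ℝ) ∈ Ωs i := fun i => interior_subset (h0 i)
  have hl : ∀ A : Set (Fin 2 → ℝ), lSet A k = seqLength A ''
      {p | k + 1 ≤ p.1 ∧ (∀ i, p.2 i ≠ 0) ∧ ∑ i, p.2 i = 0} := by
    intro A
    ext x
    constructor
    · rintro ⟨m, v, h1, h2, h3, rfl⟩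
      exact ⟨⟨m, v⟩, ⟨h1, h2, h3⟩, rfl⟩
    · rintro ⟨⟨m, v⟩, ⟨h1, h2, h3⟩, rfl⟩
      exact ⟨m, v, h1, h2, h3, rfl⟩
  have hu : ∀ A : Set (Fin 2 → ℝ), uSet A k = seqLength A ''
      {p | k + 1 ≤ p.1 ∧ (∀ i, p.2 i ≠ 0) ∧ ∑ i, p.2 i = 0 ∧ uAdmissible p.1 p.2} := by
    intro A
    ext x
    constructor
    · rintro ⟨m, v, h1, h2, h3, h4, rfl⟩
      exact ⟨⟨m, v⟩, ⟨h1, h2, h3, h4⟩, rfl⟩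
    · rintro ⟨⟨m, v⟩, ⟨h1, h2, h3, h4⟩, rfl⟩
      exact ⟨m, v, h1, h2, h3, h4, rfl⟩
  simp only [lk, uk, hl, hu]
  exact ⟨tendsto_sInf_length _ hΩcpt hΩ0 hcpt hs0 hH, tendsto_sInf_length _ hΩcpt hΩ0 hcpt hs0 hH⟩
end

section
/- Let Ω ⊂ [0,∞)² be a strongly convex moment domain, and let v_1, …, v_m ∈ ℤ² \ {0} with m ≥ 2 and v_1 + ⋯ + v_m = 0. Then Σ_{i=1}^m ‖v_i‖*_Ω ≥ min(a(Ω), b(Ω)). -/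
/-!
Since `Ω̂` is convex, nonempty and symmetric under `x ↦ -x`, the origin lies in `Ω`, so every
`Ω`-norm is nonnegative. Some coordinate `j` does not vanish identically on the `v_i`, and as the
`v_i` sum to zero, some `v_i` has a positive, hence (by integrality) at least `1`, `j`-th
coordinate. Pairing that single `v_i` with the points of `Ω` on the `j`-th axis shows that its
norm is already at least the `j`-th width.
-/

open scoped BigOperators

lemma IsStronglyConvexDomain.zero_mem {Ω : Set (Fin 2 → ℝ)}
    (h : IsStronglyConvexDomain Ω) : (0 : Fin 2 → ℝ) ∈ Ω := by
  obtain ⟨-, hconv, -, hne⟩ := h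
  obtain ⟨x, hx⟩ := hne
  have hx := interior_subset hx
  have hnx : -x ∈ hatSet Ω := by simpa [hatSet] using hx
  have h0 := hconv hx hnx (by norm_num : (0 : ℝ) ≤ 1 / 2) (by norm_num : (0 : ℝ) ≤ 1 / 2)
    (by norm_num)
  have h0' : (0 : Fin 2 → ℝ) ∈ hatSet Ω := by simpa using h0
  simpa [hatSet, ← Pi.zero_def] using h0'

/-- The supremum defining the `Ω`-norm is over a bounded set, so it dominates each pairing. -/
lemma IsStronglyConvexDomain.pairing_le {Ω : Set (Fin 2 → ℝ)}
    (h : IsStronglyConvexDomain Ω) (w : Fin 2 → ℝ) {u : Fin 2 → ℝ} (hu : u ∈ Ω) :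
    ∑ i, u i * w i ≤ omegaNorm Ω w := by
  obtain ⟨hpos, -, hcpt, -⟩ := h
  have hsub : Ω ⊆ hatSet Ω := fun x hx => by
    have hxx : (fun i => |x i|) = x := funext fun i => abs_of_nonneg (hpos x hx i)
    simpa [hatSet, hxx] using hx
  have hbdd : BddAbove ((fun u : Fin 2 → ℝ => ∑ i, u i * w i) '' hatSet Ω) :=
    (hcpt.image (by fun_prop)).bddAbove
  exact le_csSup (hbdd.mono (Set.image_mono hsub)) ⟨u, hu, rfl⟩

lemma IsStronglyConvexDomain.omegaNorm_nonneg {Ω : Set (Fin 2 → ℝ)}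
    (h : IsStronglyConvexDomain Ω) (w : Fin 2 → ℝ) : 0 ≤ omegaNorm Ω w := by
  simpa using h.pairing_le w h.zero_mem

lemma IsStronglyConvexDomain.widthA_le {Ω : Set (Fin 2 → ℝ)}
    (h : IsStronglyConvexDomain Ω) {w : Fin 2 → ℝ} (hw : 1 ≤ w 0) :
    widthA Ω ≤ omegaNorm Ω w := by
  refine Real.sSup_le (fun a ha => ?_) (h.omegaNorm_nonneg w)
  have ha0 : 0 ≤ a := by simpa using h.1 _ ha 0
  have := h.pairing_le w ha
  simp [Fin.sum_univ_two] at this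
  nlinarith

lemma IsStronglyConvexDomain.widthB_le {Ω : Set (Fin 2 → ℝ)}
    (h : IsStronglyConvexDomain Ω) {w : Fin 2 → ℝ} (hw : 1 ≤ w 1) :
    widthB Ω ≤ omegaNorm Ω w := by
  refine Real.sSup_le (fun b hb => ?_) (h.omegaNorm_nonneg w)
  have hb0 : 0 ≤ b := by simpa using h.1 _ hb 1
  have := h.pairing_le w hb
  simp [Fin.sum_univ_two] at this
  nlinarith

/-- For a strongly convex moment domain `Ω` and any sequence
`v_1, …, v_m ∈ ℤ² \ 0` with `m ≥ 2` and `∑ v_i = 0`, one has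
`∑ ‖v_i‖*_Ω ≥ min(a(Ω), b(Ω))`. -/
theorem sum_omegaNorm_ge_min_width (Ω : Set (Fin 2 → ℝ))
    (h : IsStronglyConvexDomain Ω) (m : ℕ) (hm : 2 ≤ m)
    (v : Fin m → Fin 2 → ℤ) (hv : ∀ i, v i ≠ 0) (hsum : (∑ i, v i) = 0) :
    min (widthA Ω) (widthB Ω) ≤ ∑ i, omegaNorm Ω (toR (v i)) := by
  obtain ⟨j, hj⟩ := Function.ne_iff.mp (hv ⟨0, by omega⟩)
  have hsumj : ∑ i, v i j = 0 := by simpa using congrFun hsum j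
  obtain ⟨i, -, hi⟩ := Finset.exists_pos_of_sum_zero_of_exists_nonzero (fun i => v i j) hsumj
    ⟨_, Finset.mem_univ _, hj⟩
  have hi1 : (1 : ℝ) ≤ toR (v i) j := by
    have : (1 : ℤ) ≤ v i j := hi
    unfold toR
    exact_mod_cast this
  have hsingle : omegaNorm Ω (toR (v i)) ≤ ∑ i, omegaNorm Ω (toR (v i)) :=
    Finset.single_le_sum (f := fun i => omegaNorm Ω (toR (v i)))
      (fun i _ => h.omegaNorm_nonneg _) (Finset.mem_univ i)
  refine le_trans ?_ hsingle
  fin_cases j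
  · exact (min_le_left _ _).trans (h.widthA_le hi1)
  · exact (min_le_right _ _).trans (h.widthB_le hi1)
end

section
/- Let Ω ⊂ [0,∞)² be a strongly convex moment domain with a(Ω) = b(Ω). Then 𝔩_k(Ω) = 𝔲_k(Ω) for every integer k ≥ 1. -/
/-!
Only sequences contained in a single coordinate axis can fail admissibility, so it suffices to
replace such a sequence `v_i = c_i e_j` by an admissible one that is no shorter and costs no more.

As the supremum runs over `Ω ⊂ [0,∞)²`, which contains `0`, one has `‖-e_j‖ = 0` and
`‖c e_j‖ = max(c, 0) ‖e_j‖`. Reflecting a point of `Ω̂` and averaging shows that `Ω` is closed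
under projection to the axes (`proj_mem`), so `‖e₁‖ = a(Ω)`, `‖e₂‖ = b(Ω)`, and the two agree by
hypothesis.

Let `p = ∑ max(c_i, 0)`. The sequence costs `p ‖e_j‖`, and `∑ c_i = 0` with all `c_i ≠ 0` forces
`m ≤ 2p`. If `m = 2`, the pair `e_j, -e_j` does the job. If `m ≥ 3`, then `p ≥ 2`, and the sequence
made of `e₂, -e₂` and `p - 1` copies of `e₁, -e₁` has length `2p ≥ m`, leaves both axes, and
costs `(p - 1) a(Ω) + b(Ω) = p ‖e_j‖`.
-/


open scoped BigOperators

namespace IsStronglyConvexDomain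

variable {Ω : Set (Fin 2 → ℝ)}

lemma mem_hatSet (h : IsStronglyConvexDomain Ω) {u : Fin 2 → ℝ} (hu : u ∈ Ω) :
    u ∈ hatSet Ω := by
  have : (fun i => |u i|) = u := funext fun i => abs_of_nonneg (h.1 u hu i)
  simpa [hatSet, this] using hu

/-- `Ω` is closed under multiplying each coordinate by `0` or `1`: the target is the midpoint of
`u` and the reflection of `u` in the coordinates that are to vanish. -/
lemma proj_mem (h : IsStronglyConvexDomain Ω) {u : Fin 2 → ℝ} (hu : u ∈ Ω)
    (s : Fin 2 → ℝ) (hs : ∀ i, s i = 0 ∨ s i = 1) : (fun i => s i * u i) ∈ Ω := by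
  have hr : (fun i => (2 * s i - 1) * u i) ∈ hatSet Ω := by
    have : (fun i => |(2 * s i - 1) * u i|) = u := by
      funext i
      have h0 := h.1 u hu i
      rcases hs i with e | e <;> rw [e, abs_mul, abs_of_nonneg h0] <;> norm_num
    rw [hatSet, Set.mem_ofPred_eq, this]
    exact hu
  have hconv : Convex ℝ (hatSet Ω) := h.2.1
  have hm := hconv (h.mem_hatSet hu) hr (by norm_num : (0 : ℝ) ≤ 1 / 2)
    (by norm_num : (0 : ℝ) ≤ 1 / 2) (by norm_num)
  have : (fun i => |((1 / 2 : ℝ) • u + (1 / 2 : ℝ) • fun i => (2 * s i - 1) * u i) i|)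
      = fun i => s i * u i := by
    funext i
    have h0 := h.1 u hu i
    have e : ((1 / 2 : ℝ) • u + (1 / 2 : ℝ) • fun i => (2 * s i - 1) * u i) i = s i * u i := by
      simp only [Pi.add_apply, Pi.smul_apply, smul_eq_mul]
      ring
    rw [e, abs_of_nonneg]
    rcases hs i with e | e <;> simp [e, h0]
  rw [hatSet, Set.mem_ofPred_eq, this] at hm
  exact hm

lemma zero_mem_s6 (h : IsStronglyConvexDomain Ω) : (0 : Fin 2 → ℝ) ∈ Ω := by
  obtain ⟨x, hx⟩ := h.2.2.2
  have hx' := interior_subset hx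
  have := h.proj_mem (u := fun i => |x i|) hx' (fun _ => 0) (fun _ => Or.inl rfl)
  simpa [← Pi.zero_def] using this

lemma bddAbove (h : IsStronglyConvexDomain Ω) (v : Fin 2 → ℝ) :
    BddAbove ((fun u => ∑ i, u i * v i) '' Ω) :=
  (h.2.2.1.bddAbove_image (by fun_prop)).mono
    (Set.image_mono fun _ hu => h.mem_hatSet hu)

lemma omegaNorm_nonneg_s6 (h : IsStronglyConvexDomain Ω) (v : Fin 2 → ℝ) :
    0 ≤ omegaNorm Ω v :=
  le_csSup (h.bddAbove v) ⟨0, h.zero_mem_s6, by simp⟩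

lemma sum_mul_eInt (u : Fin 2 → ℝ) (j : Fin 2) : ∑ i, u i * toR (eInt j) i = u j := by
  fin_cases j <;> simp [toR, eInt]

lemma omegaNorm_neg_eInt (h : IsStronglyConvexDomain Ω) (j : Fin 2) :
    omegaNorm Ω (toR (-eInt j)) = 0 := by
  refine le_antisymm (csSup_le ⟨0, 0, h.zero_mem_s6, by simp⟩ ?_) (h.omegaNorm_nonneg_s6 _)
  rintro _ ⟨u, hu, rfl⟩
  have e : ∑ i, u i * toR (-eInt j) i = -∑ i, u i * toR (eInt j) i := by
    simp [toR]
  simp only [e, sum_mul_eInt]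
  linarith [h.1 u hu j]

lemma omegaNorm_eInt_zero (h : IsStronglyConvexDomain Ω) :
    omegaNorm Ω (toR (eInt 0)) = widthA Ω := by
  unfold omegaNorm widthA
  congr 1
  ext a
  simp only [sum_mul_eInt, Set.mem_image, Set.mem_ofPred_eq]
  refine ⟨?_, fun ha => ⟨_, ha, rfl⟩⟩
  rintro ⟨u, hu, rfl⟩
  convert h.proj_mem hu ![1, 0] (by simp [Fin.forall_fin_two]) using 1
  ext i; fin_cases i <;> simp

lemma omegaNorm_eInt_one (h : IsStronglyConvexDomain Ω) :
    omegaNorm Ω (toR (eInt 1)) = widthB Ω := by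
  unfold omegaNorm widthB
  congr 1
  ext a
  simp only [sum_mul_eInt, Set.mem_image, Set.mem_ofPred_eq]
  refine ⟨?_, fun ha => ⟨_, ha, rfl⟩⟩
  rintro ⟨u, hu, rfl⟩
  convert h.proj_mem hu ![0, 1] (by simp [Fin.forall_fin_two]) using 1
  ext i; fin_cases i <;> simp

/-- A vector `c e_j` on the `j`-th axis has norm at least `max(c, 0) ‖e_j‖`. -/
lemma toNat_mul_le (h : IsStronglyConvexDomain Ω) (w : Fin 2 → ℤ) (j : Fin 2)
    (hw : ∀ j', j' ≠ j → w j' = 0) :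
    ((w j).toNat : ℝ) * omegaNorm Ω (toR (eInt j)) ≤ omegaNorm Ω (toR w) := by
  rcases le_or_gt (w j) 0 with hc | hc
  · simpa [Int.toNat_of_nonpos hc] using h.omegaNorm_nonneg_s6 _
  have hcast : ((w j).toNat : ℝ) = (w j : ℝ) := by
    exact_mod_cast Int.toNat_of_nonneg hc.le
  have hc' : (0 : ℝ) < w j := by exact_mod_cast hc
  rw [hcast, mul_comm, ← le_div_iff₀ hc']
  refine csSup_le ⟨_, 0, h.zero_mem_s6, rfl⟩ ?_
  rintro _ ⟨u, hu, rfl⟩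
  simp only [sum_mul_eInt]
  rw [le_div_iff₀ hc']
  refine le_csSup (h.bddAbove _) ⟨u, hu, ?_⟩
  exact Finset.sum_eq_single j (fun i _ hi => by simp [toR, hw i hi]) (by simp)

end IsStronglyConvexDomain

lemma eInt_ne_zero (j : Fin 2) : eInt j ≠ 0 := by simp [eInt]

lemma uSet_subset_lSet (Ω : Set (Fin 2 → ℝ)) (k : ℕ) : uSet Ω k ⊆ lSet Ω k := by
  rintro x ⟨m, v, h1, h2, h3, -, h5⟩
  exact ⟨m, v, h1, h2, h3, h5⟩

/-- A family indexed by any finite type that leaves both axes contributes to `𝔲_k`. -/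
lemma sum_mem_uSet (Ω : Set (Fin 2 → ℝ)) (k : ℕ) {ι : Type} [Fintype ι]
    (w : ι → Fin 2 → ℤ) (hcard : k + 1 ≤ Fintype.card ι) (h0 : ∀ i, w i ≠ 0)
    (hsum : ∑ i, w i = 0) (hadm : ∀ j : Fin 2, ∃ i, ∃ j' : Fin 2, j' ≠ j ∧ w i j' ≠ 0) :
    ∑ i, omegaNorm Ω (toR (w i)) ∈ uSet Ω k := by
  let e := (Fintype.equivFin ι).symm
  refine ⟨Fintype.card ι, fun i => w (e i), hcard, fun i => h0 _, ?_, Or.inr fun j => ?_, ?_⟩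
  · rw [e.sum_comp, hsum]
  · obtain ⟨i, hi⟩ := hadm j
    exact ⟨e.symm i, by simpa using hi⟩
  · exact (e.sum_comp (fun i => omegaNorm Ω (toR (w i)))).symm

/-- A sequence of `m` nonzero integers with zero sum has positive part at least `m / 2`. -/
lemma length_le_two_mul_sum_toNat {m : ℕ} (c : Fin m → ℤ) (h0 : ∀ i, c i ≠ 0)
    (hsum : ∑ i, c i = 0) : m ≤ 2 * ∑ i, (c i).toNat := by
  have h1 : (m : ℤ) ≤ ∑ i, (2 * ((c i).toNat : ℤ) - c i) := by
    have : ∑ _i : Fin m, (1 : ℤ) ≤ ∑ i, (2 * ((c i).toNat : ℤ) - c i) :=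
      Finset.sum_le_sum fun i _ => by have := h0 i; omega
    simpa using this
  rw [Finset.sum_sub_distrib, hsum, sub_zero, ← Finset.mul_sum] at h1
  exact_mod_cast h1

/-- The sequence consisting of `e₂, -e₂` and `q + 1` copies of `e₁, -e₁` is admissible, and when
the widths agree its total norm is `(q + 2) ‖e_j‖` for either `j`. -/
lemma exchanged_mem_uSet {Ω : Set (Fin 2 → ℝ)} (h : IsStronglyConvexDomain Ω) (A : ℝ)
    (hA : ∀ j, omegaNorm Ω (toR (eInt j)) = A) (k q : ℕ) (hq : k + 1 ≤ 2 * (q + 2)) :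
    ((q + 2 : ℕ) : ℝ) * A ∈ uSet Ω k := by
  let f : Fin (q + 2) → Fin 2 := fun i => if i = 0 then 1 else 0
  let w : Fin (q + 2) × Bool → Fin 2 → ℤ := fun x => if x.2 then eInt (f x.1) else -eInt (f x.1)
  have key := sum_mem_uSet Ω k w (by simpa [mul_comm] using hq) ?_ ?_ ?_
  · convert key using 1
    simp [Fintype.sum_prod_type, w, hA, h.omegaNorm_neg_eInt]
  · rintro ⟨i, _ | _⟩ <;> simp [w, eInt_ne_zero]
  · simp [Fintype.sum_prod_type, w]
  · intro j
    fin_cases j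
    · exact ⟨(0, true), 1, by simp, by simp [w, f, eInt]⟩
    · exact ⟨(1, true), 0, by simp, by simp [w, f, eInt]⟩

/-- Every value in the infimum defining `𝔩_k` is bounded below by one for `𝔲_k`. -/
lemma exists_uSet_le {Ω : Set (Fin 2 → ℝ)} (h : IsStronglyConvexDomain Ω)
    (hab : widthA Ω = widthB Ω) {k : ℕ} (hk : 1 ≤ k) {x : ℝ} (hx : x ∈ lSet Ω k) :
    ∃ y ∈ uSet Ω k, y ≤ x := by
  obtain ⟨m, v, hm, h0, hsum, rfl⟩ := hx
  by_cases hadm : ∀ j : Fin 2, ∃ i : Fin m, ∃ j' : Fin 2, j' ≠ j ∧ v i j' ≠ 0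
  · exact ⟨_, ⟨m, v, hm, h0, hsum, Or.inr hadm, rfl⟩, le_rfl⟩
  push Not at hadm
  obtain ⟨j, hj⟩ := hadm
  set A := omegaNorm Ω (toR (eInt 0)) with hAdef
  have hA : ∀ j, omegaNorm Ω (toR (eInt j)) = A := by
    rw [Fin.forall_fin_two]
    exact ⟨rfl, by rw [hAdef, h.omegaNorm_eInt_zero, h.omegaNorm_eInt_one, hab]⟩
  have hA0 : 0 ≤ A := h.omegaNorm_nonneg_s6 _
  have hc0 : ∀ i, v i j ≠ 0 := fun i hi => h0 i <| by
    funext j'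
    by_cases e : j' = j
    · simpa [e] using hi
    · exact hj i j' e
  have hcsum : ∑ i, v i j = 0 := by simpa using congrFun hsum j
  set p := ∑ i, (v i j).toNat with hp
  have hmp : m ≤ 2 * p := length_le_two_mul_sum_toNat _ hc0 hcsum
  have hle : (p : ℝ) * A ≤ ∑ i, omegaNorm Ω (toR (v i)) := by
    rw [hp, Nat.cast_sum, Finset.sum_mul]
    exact Finset.sum_le_sum fun i _ => by
      simpa only [hA] using h.toNat_mul_le (v i) j (hj i)
  by_cases hm2 : m = 2
  · refine ⟨A, ⟨2, ![eInt j, -eInt j], by omega, ?_, ?_, ?_, ?_⟩, le_trans ?_ hle⟩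
    · simp [Fin.forall_fin_two, eInt_ne_zero]
    · simp
    · exact Or.inl ⟨rfl, j, 0, 1, by simp, by simp, by simp⟩
    · simp [hA, h.omegaNorm_neg_eInt]
    · have : (1 : ℝ) ≤ p := by exact_mod_cast (show 1 ≤ p by omega)
      nlinarith
  · obtain ⟨q, hq⟩ : ∃ q, p = q + 2 := ⟨p - 2, by omega⟩
    rw [hq] at hle
    exact ⟨_, exchanged_mem_uSet h A hA k q (by omega), hle⟩

/-- For a strongly convex moment domain `Ω` with `a(Ω) = b(Ω)`,
one has `𝔩_k(Ω) = 𝔲_k(Ω)` for every integer `k ≥ 1`. -/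
theorem lk_eq_uk_of_widths_eq (Ω : Set (Fin 2 → ℝ))
    (h : IsStronglyConvexDomain Ω) (hab : widthA Ω = widthB Ω)
    (k : ℕ) (hk : 1 ≤ k) :
    lk Ω k = uk Ω k := by
  have hbdd : BddBelow (lSet Ω k) := ⟨0, by
    rintro _ ⟨m, v, -, -, -, rfl⟩
    exact Finset.sum_nonneg fun i _ => h.omegaNorm_nonneg_s6 _⟩
  have hu : (uSet Ω k).Nonempty :=
    ⟨_, exchanged_mem_uSet h _ (Fin.forall_fin_two.2
      ⟨rfl, by rw [h.omegaNorm_eInt_zero, h.omegaNorm_eInt_one, hab]⟩) k k (by omega)⟩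
  refine le_antisymm (csInf_le_csInf hbdd hu (uSet_subset_lSet Ω k)) ?_
  refine le_csInf (hu.mono (uSet_subset_lSet Ω k)) fun x hx => ?_
  obtain ⟨y, hy, hyx⟩ := exists_uSet_le h hab hk hx
  exact (csInf_le (hbdd.mono (uSet_subset_lSet Ω k)) hy).trans hyx
end
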